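/- arXiv:1003.1288 — 2 statements merged into one kernel-verified Lean document; each statement's English description precedes it below -/
import Mathlib

section
/- Let λ, η, κ, α ∈ ℂ and set q^x := e^{ηx}. Let a, d : ℂ → ℂ and Q, Λ : ℂ × ℂ → ℂ (second argument the twist) satisfy the t-Q-equation Λ(λ|κ') Q(λ|κ') = q^{κ'} a(λ) Q(λ−η|κ') + q^{−κ'} d(λ) Q(λ+η|κ') for both κ' = κ and κ' = κ+α. Define φ(μ) = Q(μ|κ+α)/Q(μ|κ), ρ(λ) = Λ(λ|κ+α)/Λ(λ|κ), and 𝔞(λ) = q^{−2κ} d(λ) Q(λ+η|κ) / (a(λ) Q(λ−η|κ)). Assume a(λ) ≠ 0, Λ(λ|κ) ≠ 0, Λ(λ|κ+α) ≠ 0, Q(λ|κ) ≠ 0, Q(λ−η|κ) ≠ 0, Q(λ+η|κ) ≠ 0, and 1 + 𝔞(λ) ≠ 0. Then φ(λ) = q^{−α} φ(λ+η)/ρ(λ) + (q^{α} φ(λ−η) − q^{−α} φ(λ+η)) / (ρ(λ)(1 + 𝔞(λ))). -/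
/-!
Write `u = q^κ a(λ) Q(λ-η|κ)` and `v = q^{-κ} d(λ) Q(λ+η|κ)` for the two terms on the right of
the t-Q-equation at twist `κ`. Shifting the twist by `α` multiplies them by `q^α φ(λ-η)` and
`q^{-α} φ(λ+η)`. Dividing the t-Q-equation at `κ + α` by the one at `κ` therefore exhibits
`ρ(λ) φ(λ)` as the mean of these two factors with weights `u` and `v`, and `𝔞(λ) = v / u`.
-/

open Complex

theorem weighted_mean_eq_add_sub_div {K : Type*} [Field K] {u v : K} (hu : u ≠ 0)
    (huv : u + v ≠ 0) (x y : K) :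
    (u * x + v * y) / (u + v) = y + (x - y) / (1 + v / u) := by
  rw [one_add_div hu]
  field_simp
  ring

section TQ

variable {K X T : Type*} [Field K] [AddGroup T]

/-- The ratio `F(λ|κ+α) / F(λ|κ)`, which is `φ(λ)` for `F = Q` and `ρ(λ)` for `F = Λ`. -/
def twistRatio (F : X → T → K) (κ α : T) (l : X) : K :=
  F l (κ + α) / F l κ

variable [AddGroup X]

/-- The term `q^κ a(λ) Q(λ-η|κ)` of the t-Q-equation. The powers `κ ↦ q^κ` are encoded by an
additive character. -/
def tQMinusTerm (q : AddChar T K) (η : X) (a : X → K) (Q : X → T → K) (l : X) (κ : T) : K :=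
  q κ * a l * Q (l - η) κ

/-- The term `q^{-κ} d(λ) Q(λ+η|κ)` of the t-Q-equation. -/
def tQPlusTerm (q : AddChar T K) (η : X) (d : X → K) (Q : X → T → K) (l : X) (κ : T) : K :=
  q (-κ) * d l * Q (l + η) κ

/-- Baxter's t-Q-equation at the spectral parameter `l` and twist `κ`. -/
def TQEquation (q : AddChar T K) (η : X) (a d : X → K) (Q Λ : X → T → K) (l : X) (κ : T) :
    Prop :=
  Λ l κ * Q l κ = tQMinusTerm q η a Q l κ + tQPlusTerm q η d Q l κ

/-- The auxiliary function `𝔞(λ|κ) = q^{-2κ} d(λ) Q(λ+η|κ) / (a(λ) Q(λ-η|κ))`. -/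
def auxiliaryFunction (q : AddChar T K) (η : X) (a d : X → K) (Q : X → T → K) (l : X) (κ : T) :
    K :=
  q (-(2 • κ)) * d l * Q (l + η) κ / (a l * Q (l - η) κ)

variable {q : AddChar T K} {η : X} {a d : X → K} {Q Λ : X → T → K} {l : X} {κ α : T}

theorem tQMinusTerm_ne_zero (ha : a l ≠ 0) (hQm : Q (l - η) κ ≠ 0) :
    tQMinusTerm q η a Q l κ ≠ 0 :=
  mul_ne_zero (mul_ne_zero (q.val_isUnit κ).ne_zero ha) hQm

theorem tQMinusTerm_add_twist (hQm : Q (l - η) κ ≠ 0) :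
    tQMinusTerm q η a Q l (κ + α) =
      tQMinusTerm q η a Q l κ * (q α * twistRatio Q κ α (l - η)) := by
  rw [tQMinusTerm, tQMinusTerm, twistRatio, q.map_add_eq_mul]
  field_simp

theorem tQPlusTerm_add_twist (hQp : Q (l + η) κ ≠ 0) :
    tQPlusTerm q η d Q l (κ + α) =
      tQPlusTerm q η d Q l κ * (q (-α) * twistRatio Q κ α (l + η)) := by
  rw [tQPlusTerm, tQPlusTerm, twistRatio, neg_add_rev, q.map_add_eq_mul]
  field_simp

theorem auxiliaryFunction_eq_div :
    auxiliaryFunction q η a d Q l κ = tQPlusTerm q η d Q l κ / tQMinusTerm q η a Q l κ := by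
  have hq : q (-(2 • κ)) = q (-κ) / q κ := by
    rw [two_nsmul, neg_add_rev, q.map_add_eq_mul, q.map_neg_eq_inv, div_eq_mul_inv]
  rw [auxiliaryFunction, tQPlusTerm, tQMinusTerm, hq]
  field_simp

theorem TQEquation.twistRatio_mul_twistRatio (hκ : TQEquation q η a d Q Λ l κ)
    (hκα : TQEquation q η a d Q Λ l (κ + α)) (hQm : Q (l - η) κ ≠ 0) (hQp : Q (l + η) κ ≠ 0) :
    twistRatio Q κ α l * twistRatio Λ κ α l =
      (tQMinusTerm q η a Q l κ * (q α * twistRatio Q κ α (l - η)) +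
          tQPlusTerm q η d Q l κ * (q (-α) * twistRatio Q κ α (l + η))) /
        (tQMinusTerm q η a Q l κ + tQPlusTerm q η d Q l κ) := by
  calc twistRatio Q κ α l * twistRatio Λ κ α l
      = Λ l (κ + α) * Q l (κ + α) / (Λ l κ * Q l κ) := by
        rw [mul_comm, twistRatio, twistRatio, div_mul_div_comm]
    _ = _ := by rw [hκα, hκ, tQMinusTerm_add_twist hQm, tQPlusTerm_add_twist hQp]

theorem phi_tQ_identity_general (hκ : TQEquation q η a d Q Λ l κ)
    (hκα : TQEquation q η a d Q Λ l (κ + α)) (ha : a l ≠ 0)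
    (hΛ : Λ l κ ≠ 0) (hΛα : Λ l (κ + α) ≠ 0)
    (hQ : Q l κ ≠ 0) (hQm : Q (l - η) κ ≠ 0) (hQp : Q (l + η) κ ≠ 0) :
    twistRatio Q κ α l =
      q (-α) * twistRatio Q κ α (l + η) / twistRatio Λ κ α l +
        (q α * twistRatio Q κ α (l - η) - q (-α) * twistRatio Q κ α (l + η)) /
          (twistRatio Λ κ α l * (1 + auxiliaryFunction q η a d Q l κ)) := by
  have hρ : twistRatio Λ κ α l ≠ 0 := div_ne_zero hΛα hΛ
  have hsum : tQMinusTerm q η a Q l κ + tQPlusTerm q η d Q l κ ≠ 0 :=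
    hκ ▸ mul_ne_zero hΛ hQ
  rw [mul_comm (twistRatio Λ κ α l) (1 + _), ← div_div, ← add_div, eq_div_iff hρ,
    hκ.twistRatio_mul_twistRatio hκα hQm hQp, auxiliaryFunction_eq_div,
    weighted_mean_eq_add_sub_div (tQMinusTerm_ne_zero ha hQm) hsum]

end TQ

/-- The powers `x ↦ q^x = e^{ηx}` of `q = e^η`, as an additive character of `ℂ`. -/
noncomputable def expPowChar (η : ℂ) : AddChar ℂ ℂ where
  toFun x := Complex.exp (η * x)
  map_zero_eq_one' := by rw [mul_zero, Complex.exp_zero]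
  map_add_eq_mul' x y := by rw [mul_add, Complex.exp_add]

theorem expPowChar_apply (η x : ℂ) : expPowChar η x = Complex.exp (η * x) :=
  rfl

theorem tQEquation_expPowChar_iff {η κ l : ℂ} {a d : ℂ → ℂ} {Q Λ : ℂ → ℂ → ℂ} :
    TQEquation (expPowChar η) η a d Q Λ l κ ↔
      Λ l κ * Q l κ =
        Complex.exp (η * κ) * a l * Q (l - η) κ +
          Complex.exp (-(η * κ)) * d l * Q (l + η) κ := by
  simp only [TQEquation, tQMinusTerm, tQPlusTerm, expPowChar_apply, mul_neg]

/-- The identity `φ(λ) = q^{-α} φ(λ+η)/ρ(λ) + (q^{α} φ(λ-η) - q^{-α} φ(λ+η))/(ρ(λ)(1+𝔞(λ)))`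
for `φ(μ) = Q(μ|κ+α)/Q(μ|κ)`, `ρ(λ) = Λ(λ|κ+α)/Λ(λ|κ)` and
`𝔞(λ) = q^{-2κ} d(λ) Q(λ+η|κ)/(a(λ) Q(λ-η|κ))`, a purely algebraic consequence of the
two t-Q-equations at twists `κ` and `κ+α`.  Here `q^x = e^{ηx}`. -/
theorem phi_tQ_identity (l η κ α : ℂ) (a d : ℂ → ℂ) (Q Lam : ℂ → ℂ → ℂ)
    (htQ : ∀ κ' ∈ ({κ, κ + α} : Set ℂ),
      Lam l κ' * Q l κ' =
        Complex.exp (η * κ') * a l * Q (l - η) κ' +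
          Complex.exp (-(η * κ')) * d l * Q (l + η) κ')
    (ha : a l ≠ 0)
    (hLam1 : Lam l κ ≠ 0) (hLam2 : Lam l (κ + α) ≠ 0)
    (hQ : Q l κ ≠ 0) (hQm : Q (l - η) κ ≠ 0) (hQp : Q (l + η) κ ≠ 0)
    (hfra : 1 + Complex.exp (-(η * (2 * κ))) * d l * Q (l + η) κ /
        (a l * Q (l - η) κ) ≠ 0) :
    Q l (κ + α) / Q l κ =
      Complex.exp (-(η * α)) * (Q (l + η) (κ + α) / Q (l + η) κ) /
          (Lam l (κ + α) / Lam l κ) +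
        (Complex.exp (η * α) * (Q (l - η) (κ + α) / Q (l - η) κ) -
            Complex.exp (-(η * α)) * (Q (l + η) (κ + α) / Q (l + η) κ)) /
          ((Lam l (κ + α) / Lam l κ) *
            (1 + Complex.exp (-(η * (2 * κ))) * d l * Q (l + η) κ /
              (a l * Q (l - η) κ))) := by
  have hκ := tQEquation_expPowChar_iff.mpr (htQ κ (.inl rfl))
  have hκα := tQEquation_expPowChar_iff.mpr (htQ (κ + α) (.inr rfl))
  simpa only [twistRatio, auxiliaryFunction, expPowChar_apply, mul_neg, nsmul_eq_mul,
    Nat.cast_ofNat] using phi_tQ_identity_general hκ hκα ha hLam1 hLam2 hQ hQm hQp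
end

section
/- Let η, α ∈ ℂ with 0 < Im η < π/2 and Re η = 0, set q^x := e^{ηx}, and define K_α(z) = q^{−α} coth(z−η) − q^{α} coth(z+η). Let λ ∈ ℂ and let R = [x₁, x₂] × [y₁, y₂] be a closed rectangle in ℂ with height y₂ − y₁ < π whose open interior contains both λ + η and λ − η. Let φ be holomorphic on an open set containing R. Then the counterclockwise boundary integral satisfies (1/2πi) ∮_{∂R} φ(μ) K_α(μ − λ) dμ = q^{−α} φ(λ+η) − q^{α} φ(λ−η). -/
/-!
Since `coth (μ - p) = cosh (μ - p) / sinh (μ - p)` and `sinh` has only the zero `0` in the strip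
`|Im w| < π`, each of the two terms of the kernel has a single simple pole in the rectangle. If `g`
vanishes to first order at `p` and nowhere else, then `1 / g(μ) = 1 / ((μ - p) · dslope g p μ)` with
a nonvanishing holomorphic `dslope g p`, so `∮ f / g` is an instance of Cauchy's integral formula
on a rectangle. That formula follows from Cauchy–Goursat for `dslope f p` together with
`∮ dμ / (μ - p) = 2πi`. Here the principal logarithm integrates three of the edges; the left edge
crosses its branch cut, and `log (p - μ)`, used there instead, produces the `2πi`.
-/

open Complex Filter Topology intervalIntegral

/-- The complex hyperbolic cotangent. -/
noncomputable def ccoth (z : ℂ) : ℂ := Complex.cosh z / Complex.sinh z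

/-- The deformed kernel `K_α(z) = q^{-α} coth(z-η) - q^{α} coth(z+η)`, where `q^x = e^{ηx}`. -/
noncomputable def Kalpha (η α z : ℂ) : ℂ :=
  Complex.exp (-(η * α)) * ccoth (z - η) - Complex.exp (η * α) * ccoth (z + η)

section RectIntegral

open Set

variable {E : Type*} [NormedAddCommGroup E] {x₁ x₂ y₁ y₂ : ℝ}

/-- The union of the four edges of the rectangle with opposite corners `x₁ + y₁ i` and
`x₂ + y₂ i`. Unordered intervals are used, so that the corners may come in either order. -/
def rectBoundary (x₁ x₂ y₁ y₂ : ℝ) : Set ℂ :=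
  uIcc x₁ x₂ ×ℂ {y₁, y₂} ∪ {x₁, x₂} ×ℂ uIcc y₁ y₂

lemma horizontal_mem_rectBoundary {x y : ℝ} (hx : x ∈ uIcc x₁ x₂) (hy : y ∈ ({y₁, y₂} : Set ℝ)) :
    (x + y * I : ℂ) ∈ rectBoundary x₁ x₂ y₁ y₂ :=
  .inl <| by simpa [mem_reProdIm] using ⟨hx, hy⟩

lemma vertical_mem_rectBoundary {x y : ℝ} (hx : x ∈ ({x₁, x₂} : Set ℝ)) (hy : y ∈ uIcc y₁ y₂) :
    (x + y * I : ℂ) ∈ rectBoundary x₁ x₂ y₁ y₂ :=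
  .inr <| by simpa [mem_reProdIm] using ⟨hx, hy⟩

lemma rectBoundary_subset (hx : x₁ ≤ x₂) (hy : y₁ ≤ y₂) :
    rectBoundary x₁ x₂ y₁ y₂ ⊆ Icc x₁ x₂ ×ℂ Icc y₁ y₂ := by
  rintro z (⟨hzx, hzy | hzy⟩ | ⟨hzx | hzx, hzy⟩) <;> simp_all [mem_reProdIm]

lemma ne_of_mem_rectBoundary {p z : ℂ} (hp : p ∈ Ioo x₁ x₂ ×ℂ Ioo y₁ y₂)
    (hz : z ∈ rectBoundary x₁ x₂ y₁ y₂) : z ≠ p := by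
  rintro rfl
  rcases hz with ⟨-, h | h⟩ | ⟨h | h, -⟩
  exacts [hp.2.1.ne' h, hp.2.2.ne h, hp.1.1.ne' h, hp.1.2.ne h]

lemma intervalIntegrable_horizontal {f : ℂ → E} (hf : ContinuousOn f (rectBoundary x₁ x₂ y₁ y₂))
    {y : ℝ} (hy : y ∈ ({y₁, y₂} : Set ℝ)) :
    IntervalIntegrable (fun x : ℝ => f (x + y * I)) MeasureTheory.volume x₁ x₂ :=
  (hf.comp (f := fun x : ℝ => (x + y * I : ℂ)) (by fun_prop)
    fun _ hx => horizontal_mem_rectBoundary hx hy).intervalIntegrable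

lemma intervalIntegrable_vertical {f : ℂ → E} (hf : ContinuousOn f (rectBoundary x₁ x₂ y₁ y₂))
    {x : ℝ} (hx : x ∈ ({x₁, x₂} : Set ℝ)) :
    IntervalIntegrable (fun y : ℝ => f (x + y * I)) MeasureTheory.volume y₁ y₂ :=
  (hf.comp (f := fun y : ℝ => (x + y * I : ℂ)) (by fun_prop)
    fun _ hy => vertical_mem_rectBoundary hx hy).intervalIntegrable

variable [NormedSpace ℂ E]

/-- The counterclockwise integral of `f` over the boundary of `[x₁, x₂] × [y₁, y₂]`, for a
vector-valued `f`. As for interval integrals, reversing the order of two endpoints changes the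
sign. -/
noncomputable def rectIntegral (x₁ x₂ y₁ y₂ : ℝ) (f : ℂ → E) : E :=
  (∫ x in x₁..x₂, f (x + y₁ * I)) + I • (∫ y in y₁..y₂, f (x₂ + y * I)) -
    (∫ x in x₁..x₂, f (x + y₂ * I)) - I • (∫ y in y₁..y₂, f (x₁ + y * I))

lemma rectIntegral_sub {f g : ℂ → E} (hf : ContinuousOn f (rectBoundary x₁ x₂ y₁ y₂))
    (hg : ContinuousOn g (rectBoundary x₁ x₂ y₁ y₂)) :
    rectIntegral x₁ x₂ y₁ y₂ (fun z => f z - g z) =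
      rectIntegral x₁ x₂ y₁ y₂ f - rectIntegral x₁ x₂ y₁ y₂ g := by
  have horizontal {y : ℝ} (hy : y ∈ ({y₁, y₂} : Set ℝ)) :=
    integral_sub (intervalIntegrable_horizontal hf hy) (intervalIntegrable_horizontal hg hy)
  have vertical {x : ℝ} (hx : x ∈ ({x₁, x₂} : Set ℝ)) :=
    integral_sub (intervalIntegrable_vertical hf hx) (intervalIntegrable_vertical hg hx)
  simp only [rectIntegral, horizontal (mem_insert _ _), horizontal (mem_insert_of_mem _ rfl),
    vertical (mem_insert _ _), vertical (mem_insert_of_mem _ rfl), smul_sub]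
  abel

lemma rectIntegral_smul_const [CompleteSpace E] (f : ℂ → ℂ) (c : E) :
    rectIntegral x₁ x₂ y₁ y₂ (fun z => f z • c) = rectIntegral x₁ x₂ y₁ y₂ f • c := by
  simp only [rectIntegral, intervalIntegral.integral_smul_const, add_smul, sub_smul, smul_assoc]

lemma rectIntegral_congr {f g : ℂ → E} (h : EqOn f g (rectBoundary x₁ x₂ y₁ y₂)) :
    rectIntegral x₁ x₂ y₁ y₂ f = rectIntegral x₁ x₂ y₁ y₂ g := by
  have horizontal {y : ℝ} (hy : y ∈ ({y₁, y₂} : Set ℝ)) :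
      ∫ x in x₁..x₂, f (x + y * I) = ∫ x in x₁..x₂, g (x + y * I) :=
    integral_congr fun _ hx => h (horizontal_mem_rectBoundary hx hy)
  have vertical {x : ℝ} (hx : x ∈ ({x₁, x₂} : Set ℝ)) :
      ∫ y in y₁..y₂, f (x + y * I) = ∫ y in y₁..y₂, g (x + y * I) :=
    integral_congr fun _ hy => h (vertical_mem_rectBoundary hx hy)
  simp only [rectIntegral, horizontal (mem_insert _ _), horizontal (mem_insert_of_mem _ rfl),
    vertical (mem_insert _ _), vertical (mem_insert_of_mem _ rfl)]

lemma rectIntegral_eq_zero_of_continuousOn_of_differentiableOn (hx : x₁ ≤ x₂) (hy : y₁ ≤ y₂)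
    {f : ℂ → E} (hc : ContinuousOn f (Icc x₁ x₂ ×ℂ Icc y₁ y₂))
    (hd : DifferentiableOn ℂ f (Ioo x₁ x₂ ×ℂ Ioo y₁ y₂)) :
    rectIntegral x₁ x₂ y₁ y₂ f = 0 := by
  rw [rectIntegral, add_sub_right_comm]
  exact integral_boundary_rect_eq_zero_of_continuousOn_of_differentiableOn f ⟨x₁, y₁⟩ ⟨x₂, y₂⟩
    (by simpa only [uIcc_of_le hx, uIcc_of_le hy] using hc)
    (by simpa only [min_eq_left hx, max_eq_right hx, min_eq_left hy, max_eq_right hy] using hd)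

end RectIntegral

section Logarithm

open Set

variable {x₁ x₂ y₁ y₂ : ℝ} {p : ℂ}

lemma integral_div_eq_log_sub_log {γ γ' : ℝ → ℂ} {a b : ℝ}
    (hγ : ∀ t ∈ uIcc a b, HasDerivAt γ (γ' t) t) (hγ' : ContinuousOn γ' (uIcc a b))
    (hmem : ∀ t ∈ uIcc a b, γ t ∈ slitPlane) :
    ∫ t in a..b, γ' t / γ t = log (γ b) - log (γ a) := by
  refine integral_eq_sub_of_hasDerivAt (f := fun t => log (γ t))
    (fun t ht => (hγ t ht).clog_real (hmem t ht)) (ContinuousOn.intervalIntegrable ?_)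
  exact hγ'.div (fun t ht => (hγ t ht).continuousAt.continuousWithinAt)
    fun t ht => slitPlane_ne_zero (hmem t ht)

lemma hasDerivAt_horizontal (y t : ℝ) : HasDerivAt (fun x : ℝ => (x + y * I - p : ℂ)) 1 t :=
  ((hasDerivAt_id t).ofReal_comp.add_const _).sub_const _

lemma hasDerivAt_vertical (x t : ℝ) : HasDerivAt (fun y : ℝ => (x + y * I - p : ℂ)) I t := by
  simpa using (((hasDerivAt_id t).ofReal_comp.mul_const I).const_add (x : ℂ)).sub_const p

lemma integral_inv_horizontal {y : ℝ} (hy : y ≠ p.im) :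
    ∫ x in x₁..x₂, (x + y * I - p : ℂ)⁻¹ = log (x₂ + y * I - p) - log (x₁ + y * I - p) := by
  simpa using integral_div_eq_log_sub_log (a := x₁) (b := x₂)
    (fun t _ => hasDerivAt_horizontal (p := p) y t) continuousOn_const
    fun t _ => .inr (by simpa [sub_eq_zero] using hy)

lemma integral_inv_vertical_of_re_lt {x : ℝ} (hx : p.re < x) :
    I * ∫ y in y₁..y₂, (x + y * I - p : ℂ)⁻¹ = log (x + y₂ * I - p) - log (x + y₁ * I - p) := by
  simpa [div_eq_mul_inv] using integral_div_eq_log_sub_log (a := y₁) (b := y₂)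
    (fun t _ => hasDerivAt_vertical (p := p) x t) continuousOn_const
    fun t _ => .inl (by simpa using hx)

lemma integral_inv_vertical_of_lt_re {x : ℝ} (hx : x < p.re) :
    I * ∫ y in y₁..y₂, (x + y * I - p : ℂ)⁻¹ =
      log (-(x + y₂ * I - p)) - log (-(x + y₁ * I - p)) := by
  simpa [neg_div_neg_eq, div_eq_mul_inv, -neg_sub] using
    integral_div_eq_log_sub_log (a := y₁) (b := y₂)
      (fun t _ => (hasDerivAt_vertical (p := p) x t).fun_neg) continuousOn_const
      fun t _ => .inl (by simpa using hx)

lemma log_neg_eq_log_sub_pi_mul_I_of_im_pos {z : ℂ} (hz : 0 < z.im) :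
    log (-z) = log z - Real.pi * I := by
  simp only [log, norm_neg, arg_neg_eq_arg_sub_pi_of_im_pos hz]
  push_cast
  ring

lemma log_neg_eq_log_add_pi_mul_I_of_im_neg {z : ℂ} (hz : z.im < 0) :
    log (-z) = log z + Real.pi * I := by
  simp only [log, norm_neg, arg_neg_eq_arg_add_pi_of_im_neg hz]
  push_cast
  ring

lemma rectIntegral_sub_inv_of_mem (hp : p ∈ Ioo x₁ x₂ ×ℂ Ioo y₁ y₂) :
    rectIntegral x₁ x₂ y₁ y₂ (fun z => (z - p)⁻¹) = 2 * Real.pi * I := by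
  obtain ⟨⟨hx₁, hx₂⟩, hy₁, hy₂⟩ := hp
  have log_top : log (-(x₁ + y₂ * I - p)) = log (x₁ + y₂ * I - p) - Real.pi * I :=
    log_neg_eq_log_sub_pi_mul_I_of_im_pos (by simpa using hy₂)
  have log_bottom : log (-(x₁ + y₁ * I - p)) = log (x₁ + y₁ * I - p) + Real.pi * I :=
    log_neg_eq_log_add_pi_mul_I_of_im_neg (by simpa using hy₁)
  rw [rectIntegral, smul_eq_mul, smul_eq_mul, integral_inv_horizontal hy₁.ne,
    integral_inv_horizontal hy₂.ne', integral_inv_vertical_of_re_lt hx₂,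
    integral_inv_vertical_of_lt_re hx₁, log_top, log_bottom]
  ring

end Logarithm

section Residue

open Set

variable {x₁ x₂ y₁ y₂ : ℝ} {p : ℂ}

lemma Ioo_reProdIm_Ioo_mem_nhds (hp : p ∈ Ioo x₁ x₂ ×ℂ Ioo y₁ y₂) :
    Ioo x₁ x₂ ×ℂ Ioo y₁ y₂ ∈ 𝓝 p :=
  (isOpen_Ioo.reProdIm isOpen_Ioo).mem_nhds hp

lemma Ioo_reProdIm_Ioo_subset : Ioo x₁ x₂ ×ℂ Ioo y₁ y₂ ⊆ Icc x₁ x₂ ×ℂ Icc y₁ y₂ :=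
  fun _ hz => ⟨Ioo_subset_Icc_self hz.1, Ioo_subset_Icc_self hz.2⟩

variable {E : Type*} [NormedAddCommGroup E] [NormedSpace ℂ E] {f : ℂ → E}

lemma continuousOn_dslope_rect (hp : p ∈ Ioo x₁ x₂ ×ℂ Ioo y₁ y₂)
    (hc : ContinuousOn f (Icc x₁ x₂ ×ℂ Icc y₁ y₂))
    (hd : DifferentiableOn ℂ f (Ioo x₁ x₂ ×ℂ Ioo y₁ y₂)) :
    ContinuousOn (dslope f p) (Icc x₁ x₂ ×ℂ Icc y₁ y₂) :=
  have hnhds := Ioo_reProdIm_Ioo_mem_nhds hp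
  (continuousOn_dslope (mem_of_superset hnhds Ioo_reProdIm_Ioo_subset)).2
    ⟨hc, hd.differentiableAt hnhds⟩

variable [CompleteSpace E]

lemma rectIntegral_sub_inv_smul_of_mem (hp : p ∈ Ioo x₁ x₂ ×ℂ Ioo y₁ y₂)
    (hc : ContinuousOn f (Icc x₁ x₂ ×ℂ Icc y₁ y₂))
    (hd : DifferentiableOn ℂ f (Ioo x₁ x₂ ×ℂ Ioo y₁ y₂)) :
    rectIntegral x₁ x₂ y₁ y₂ (fun z => (z - p)⁻¹ • f z) = (2 * Real.pi * I : ℂ) • f p := by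
  have hx : x₁ ≤ x₂ := (hp.1.1.trans hp.1.2).le
  have hy : y₁ ≤ y₂ := (hp.2.1.trans hp.2.2).le
  have slope_integral : rectIntegral x₁ x₂ y₁ y₂ (dslope f p) = 0 :=
    rectIntegral_eq_zero_of_continuousOn_of_differentiableOn hx hy
      (continuousOn_dslope_rect hp hc hd)
      ((differentiableOn_dslope (Ioo_reProdIm_Ioo_mem_nhds hp)).2 hd)
  have slope_eq : EqOn (dslope f p) (fun z => (z - p)⁻¹ • f z - (z - p)⁻¹ • f p)
      (rectBoundary x₁ x₂ y₁ y₂) := fun z hz => by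
    rw [dslope_of_ne f (ne_of_mem_rectBoundary hp hz), slope_def_module, smul_sub]
  have inv_continuousOn : ContinuousOn (fun z => (z - p)⁻¹) (rectBoundary x₁ x₂ y₁ y₂) :=
    ContinuousOn.inv₀ (by fun_prop) fun z hz => sub_ne_zero.2 (ne_of_mem_rectBoundary hp hz)
  rw [rectIntegral_congr slope_eq,
    rectIntegral_sub (inv_continuousOn.fun_smul (hc.mono (rectBoundary_subset hx hy)))
      (inv_continuousOn.fun_smul continuousOn_const),
    rectIntegral_smul_const, rectIntegral_sub_inv_of_mem hp] at slope_integral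
  exact sub_eq_zero.1 slope_integral

lemma rectIntegral_inv_smul_of_simple_zero {g : ℂ → ℂ} (hp : p ∈ Ioo x₁ x₂ ×ℂ Ioo y₁ y₂)
    (hgc : ContinuousOn g (Icc x₁ x₂ ×ℂ Icc y₁ y₂))
    (hgd : DifferentiableOn ℂ g (Ioo x₁ x₂ ×ℂ Ioo y₁ y₂))
    (hzero : ∀ z ∈ Icc x₁ x₂ ×ℂ Icc y₁ y₂, g z = 0 ↔ z = p) (hderiv : deriv g p ≠ 0)
    (hfc : ContinuousOn f (Icc x₁ x₂ ×ℂ Icc y₁ y₂))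
    (hfd : DifferentiableOn ℂ f (Ioo x₁ x₂ ×ℂ Ioo y₁ y₂)) :
    rectIntegral x₁ x₂ y₁ y₂ (fun z => (g z)⁻¹ • f z) =
      (2 * Real.pi * I : ℂ) • (deriv g p)⁻¹ • f p := by
  have g_eq (z : ℂ) : g z = (z - p) * dslope g p z :=
    (sub_smul_dslope_of_zero ((hzero p (Ioo_reProdIm_Ioo_subset hp)).2 rfl) z).symm
  have slope_ne_zero : ∀ z ∈ Icc x₁ x₂ ×ℂ Icc y₁ y₂, dslope g p z ≠ 0 := by
    intro z hz h
    obtain rfl : z = p := (hzero z hz).1 (by rw [g_eq, h, mul_zero])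
    exact hderiv (by rwa [dslope_same] at h)
  have slope_differentiableOn := (differentiableOn_dslope (Ioo_reProdIm_Ioo_mem_nhds hp)).2 hgd
  rw [← dslope_same g p,
    ← rectIntegral_sub_inv_smul_of_mem (f := fun z => (dslope g p z)⁻¹ • f z) hp
      (((continuousOn_dslope_rect hp hgc hgd).inv₀ slope_ne_zero).smul hfc)
      ((slope_differentiableOn.fun_inv fun z hz =>
        slope_ne_zero z (Ioo_reProdIm_Ioo_subset hz)).smul hfd)]
  simp only [g_eq, mul_inv, mul_smul]

end Residue

section Kernel

open Set

lemma sinh_eq_zero_iff_of_abs_im_lt_pi {z : ℂ} (hz : |z.im| < Real.pi) : sinh z = 0 ↔ z = 0 := by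
  refine ⟨fun h => ?_, fun h => by rw [h, sinh_zero]⟩
  obtain ⟨k, hk⟩ := sin_eq_zero_iff.1 (show sin (z * I) = 0 by rw [sin_mul_I, h, zero_mul])
  have im_eq : -z.im = k * Real.pi := by simpa using congrArg re hk
  have re_eq : z.re = 0 := by simpa using congrArg im hk
  have k_eq : k = 0 := by
    rw [← abs_neg, im_eq, abs_mul, abs_of_pos Real.pi_pos, mul_lt_iff_lt_one_left Real.pi_pos] at hz
    exact Int.abs_lt_one_iff.1 (by exact_mod_cast hz)
  exact Complex.ext re_eq (by simpa [k_eq] using im_eq)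

variable {x₁ x₂ y₁ y₂ : ℝ} {p : ℂ}

lemma sinh_sub_eq_zero_iff_of_mem_rect (hheight : y₂ - y₁ ≤ Real.pi)
    (hp : p ∈ Ioo x₁ x₂ ×ℂ Ioo y₁ y₂) {z : ℂ} (hz : z ∈ Icc x₁ x₂ ×ℂ Icc y₁ y₂) :
    sinh (z - p) = 0 ↔ z = p := by
  obtain ⟨-, hp₁, hp₂⟩ := hp
  obtain ⟨-, hz₁, hz₂⟩ := hz
  rw [sinh_eq_zero_iff_of_abs_im_lt_pi, sub_eq_zero]
  rw [sub_im, abs_lt]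
  constructor <;> linarith

lemma continuousOn_ccoth_sub (hheight : y₂ - y₁ ≤ Real.pi) (hp : p ∈ Ioo x₁ x₂ ×ℂ Ioo y₁ y₂) :
    ContinuousOn (fun z => ccoth (z - p)) (rectBoundary x₁ x₂ y₁ y₂) := by
  have hsub := rectBoundary_subset (hp.1.1.trans hp.1.2).le (hp.2.1.trans hp.2.2).le
  refine ContinuousOn.div (by fun_prop) (by fun_prop) fun z hz h => ?_
  exact ne_of_mem_rectBoundary hp hz
    ((sinh_sub_eq_zero_iff_of_mem_rect hheight hp (hsub hz)).1 h)

variable {E : Type*} [NormedAddCommGroup E] [NormedSpace ℂ E] [CompleteSpace E]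

lemma rectIntegral_ccoth_sub_smul (hheight : y₂ - y₁ ≤ Real.pi)
    (hp : p ∈ Ioo x₁ x₂ ×ℂ Ioo y₁ y₂) {φ : ℂ → E}
    (hc : ContinuousOn φ (Icc x₁ x₂ ×ℂ Icc y₁ y₂))
    (hd : DifferentiableOn ℂ φ (Ioo x₁ x₂ ×ℂ Ioo y₁ y₂)) :
    rectIntegral x₁ x₂ y₁ y₂ (fun z => ccoth (z - p) • φ z) = (2 * Real.pi * I : ℂ) • φ p := by
  have deriv_sinh_sub : deriv (fun z => sinh (z - p)) p = 1 := by simp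
  have residue := rectIntegral_inv_smul_of_simple_zero
    (g := fun z => sinh (z - p)) (f := fun z => cosh (z - p) • φ z) hp (by fun_prop)
    (by fun_prop) (fun z hz => sinh_sub_eq_zero_iff_of_mem_rect hheight hp hz)
    (by simp [deriv_sinh_sub]) (ContinuousOn.smul (by fun_prop) hc)
    (DifferentiableOn.smul (by fun_prop) hd)
  simpa only [ccoth, div_eq_inv_mul, mul_smul, deriv_sinh_sub, inv_one, one_smul, sub_self,
    cosh_zero] using residue

theorem rectangle_residue_general (η α l : ℂ) (hheight : y₂ - y₁ ≤ Real.pi)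
    (hp : l + η ∈ Ioo x₁ x₂ ×ℂ Ioo y₁ y₂) (hm : l - η ∈ Ioo x₁ x₂ ×ℂ Ioo y₁ y₂) {φ : ℂ → E}
    (hc : ContinuousOn φ (Icc x₁ x₂ ×ℂ Icc y₁ y₂))
    (hd : DifferentiableOn ℂ φ (Ioo x₁ x₂ ×ℂ Ioo y₁ y₂)) :
    (1 / (2 * Real.pi * I) : ℂ) • rectIntegral x₁ x₂ y₁ y₂ (fun z => Kalpha η α (z - l) • φ z) =
      exp (-(η * α)) • φ (l + η) - exp (η * α) • φ (l - η) := by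
  have hcB : ContinuousOn φ (rectBoundary x₁ x₂ y₁ y₂) :=
    hc.mono (rectBoundary_subset (hp.1.1.trans hp.1.2).le (hp.2.1.trans hp.2.2).le)
  have kernel_split (z : ℂ) : Kalpha η α (z - l) • φ z =
      ccoth (z - (l + η)) • exp (-(η * α)) • φ z - ccoth (z - (l - η)) • exp (η * α) • φ z := by
    rw [Kalpha, sub_smul, mul_smul, mul_smul, sub_sub, ← sub_add, smul_comm, smul_comm (exp _)]
  simp only [kernel_split]
  rw [rectIntegral_sub ((continuousOn_ccoth_sub hheight hp).fun_smul (hcB.fun_const_smul _))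
      ((continuousOn_ccoth_sub hheight hm).fun_smul (hcB.fun_const_smul _)),
    rectIntegral_ccoth_sub_smul hheight hp (hc.fun_const_smul _) (hd.fun_const_smul _),
    rectIntegral_ccoth_sub_smul hheight hm (hc.fun_const_smul _) (hd.fun_const_smul _),
    ← smul_sub, one_div, inv_smul_smul₀ two_pi_I_ne_zero]

end Kernel

/-- Residue computation: for a rectangle `R = [x₁,x₂] × [y₁,y₂]` of height `< π` whose
open interior contains `λ+η` and `λ-η`, and `φ` holomorphic on an open set containing `R`,
the counterclockwise boundary integral satisfies
`(1/2πi) ∮_{∂R} φ(μ) K_α(μ-λ) dμ = q^{-α} φ(λ+η) - q^{α} φ(λ-η)`. -/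
theorem rectangle_residue (η α l : ℂ)
    (hηre : η.re = 0) (hηim1 : 0 < η.im) (hηim2 : η.im < Real.pi / 2)
    (x₁ x₂ y₁ y₂ : ℝ) (hheight : y₂ - y₁ < Real.pi)
    (hp1 : (l + η).re ∈ Set.Ioo x₁ x₂) (hp2 : (l + η).im ∈ Set.Ioo y₁ y₂)
    (hm1 : (l - η).re ∈ Set.Ioo x₁ x₂) (hm2 : (l - η).im ∈ Set.Ioo y₁ y₂)
    (φ : ℂ → ℂ) (U : Set ℂ) (hU : IsOpen U)
    (hRU : {z : ℂ | z.re ∈ Set.Icc x₁ x₂ ∧ z.im ∈ Set.Icc y₁ y₂} ⊆ U)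
    (hφ : DifferentiableOn ℂ φ U) :
    (1 / (2 * Real.pi * Complex.I)) *
        ((∫ x in x₁..x₂, φ ((x : ℂ) + y₁ * Complex.I) *
            Kalpha η α ((x : ℂ) + y₁ * Complex.I - l)) +
         (∫ y in y₁..y₂, φ ((x₂ : ℂ) + y * Complex.I) *
            Kalpha η α ((x₂ : ℂ) + y * Complex.I - l) * Complex.I) -
         (∫ x in x₁..x₂, φ ((x : ℂ) + y₂ * Complex.I) *
            Kalpha η α ((x : ℂ) + y₂ * Complex.I - l)) -
         (∫ y in y₁..y₂, φ ((x₁ : ℂ) + y * Complex.I) *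
            Kalpha η α ((x₁ : ℂ) + y * Complex.I - l) * Complex.I)) =
      Complex.exp (-(η * α)) * φ (l + η) - Complex.exp (η * α) * φ (l - η) := by
  simpa [rectIntegral, integral_mul_const, mul_comm] using
    rectangle_residue_general η α l hheight.le ⟨hp1, hp2⟩ ⟨hm1, hm2⟩ (hφ.continuousOn.mono hRU)
      (hφ.mono (Ioo_reProdIm_Ioo_subset.trans hRU))
end
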